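/- Let X be a nonempty topological space, R a nonzero commutative Banach ring isolated at 0, and ℓ¹(ℤ,R) the completion of R^{⊕ℤ} under the norm Σ_n ‖r_n‖ (Archimedean ℓ¹ norm, with all weights 1). Then the natural bijective map Cfin(ℤ_disc, R) ⊗̂_R ℓ¹(ℤ,R) → Cfin(ℤ_disc, ℓ¹(ℤ,R)) (where ℤ_disc is ℤ with the discrete topology) is not an isomorphism of Banach modules: its inverse is unbounded. Specifically, for each n ∈ ℕ, the element f_n = Σ_{i=0}^n 1_{{i}} ⊗ δ_i has image of norm ‖1‖_R in the target but norm at least ε²·n in the source, where ε > 0 satisfies {r : ‖r‖_R < ε} = {0}. -/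

import Mathlib

open scoped TensorProduct

set_option synthInstance.maxHeartbeats 1000000

variable (R : Type*) [NormedCommRing R] [CompleteSpace R] [Nontrivial R]

/-- The `R`-module of continuous functions `ℤ → R` (for the discrete topology on `ℤ`)
with finite image. -/
def CfZ : Submodule R (ℤ → R) where
  carrier := {f | Continuous f ∧ (Set.range f).Finite}
  add_mem' {a b} ha hb := ⟨continuous_of_discreteTopology,
    (Set.Finite.image2 (· + ·) ha.2 hb.2).subset (by
      rintro _ ⟨x, rfl⟩
      exact Set.mem_image2_of_mem (Set.mem_range_self x) (Set.mem_range_self x))⟩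
  zero_mem' := ⟨continuous_of_discreteTopology, Set.finite_range_const⟩
  smul_mem' c g hg := ⟨continuous_of_discreteTopology,
    (hg.2.image (c • ·)).subset (by
      rintro _ ⟨x, rfl⟩
      exact ⟨g x, Set.mem_range_self x, rfl⟩)⟩

/-- Finite-image functions `ℤ → ℓ¹(ℤ,R)`; since `ℤ` is discrete, these are exactly the
continuous functions with finite image.  Here `ℓ¹(ℤ,R) = ℤ →₀ R`, which coincides with
the completion of `R^{⊕ℤ}` for the `ℓ¹` norm since `R` is isolated at `0`. -/
noncomputable def CfL : Submodule R (ℤ → (ℤ →₀ R)) where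
  carrier := {f | (Set.range f).Finite}
  add_mem' {a b} ha hb :=
    (Set.Finite.image2 (· + ·) ha hb).subset (by
      rintro _ ⟨x, rfl⟩
      exact Set.mem_image2_of_mem (Set.mem_range_self x) (Set.mem_range_self x))
  zero_mem' := Set.finite_range_const
  smul_mem' c g hg :=
    (hg.image (c • ·)).subset (by
      rintro _ ⟨x, rfl⟩
      exact ⟨g x, Set.mem_range_self x, rfl⟩)

/-- The `ℓ¹` norm `∑ₙ ‖a n‖` on `ℓ¹(ℤ,R) = ℤ →₀ R`. -/
noncomputable def l1norm (a : ℤ →₀ R) : ℝ := a.sum fun _ r => ‖r‖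

/-- The (Archimedean) projective tensor seminorm on `Cfin(ℤ,R) ⊗[R] ℓ¹(ℤ,R)`, with
`Cfin(ℤ,R)` carrying the supremum norm and `ℓ¹(ℤ,R)` the `ℓ¹` norm. -/
noncomputable def pn (t : ↥(CfZ R) ⊗[R] (ℤ →₀ R)) : ℝ :=
  sInf {c : ℝ | ∃ l : List (↥(CfZ R) × (ℤ →₀ R)),
      (l.map fun p => p.1 ⊗ₜ[R] p.2).sum = t ∧
      (l.map fun p => (⨆ x : ℤ, ‖p.1.1 x‖) * l1norm R p.2).sum = c}

/-- The supremum norm on `Cfin(ℤ, ℓ¹(ℤ,R))`. -/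
noncomputable def supL (g : ↥(CfL R)) : ℝ := ⨆ x : ℤ, l1norm R (g.1 x)

/-- The characteristic function `1_{{i}} : ℤ → R` as an element of `Cfin(ℤ,R)`. -/
def ind (i : ℕ) : ↥(CfZ R) :=
  ⟨fun m => if m = (i : ℤ) then 1 else 0,
    ⟨continuous_of_discreteTopology,
      ((Set.finite_singleton (0 : R)).insert 1).subset (by
        rintro _ ⟨x, rfl⟩
        by_cases h : x = (i : ℤ) <;> simp [h])⟩⟩

/-- The element `f_n = ∑_{i=0}^n 1_{{i}} ⊗ δ_i`. -/
noncomputable def fn (n : ℕ) : ↥(CfZ R) ⊗[R] (ℤ →₀ R) :=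
  ∑ i ∈ Finset.range (n + 1), (ind R i) ⊗ₜ[R] (Finsupp.single (i : ℤ) (1 : R))

/-!
A tensor `t` with a representation of length `k` has, for all functionals `fᵢ` and `gⱼ`, a pairing
matrix `(fᵢ ⊗ gⱼ)(t)` that factors through `R ^ k`, so the rank of that matrix bounds the tensor
rank of `t` from below. Evaluations and coordinates turn `f_n` into the identity matrix of size
`n + 1`. Since `R` is isolated at `0`, every nonzero pure tensor in a representation costs at least
`ε²`, so the projective seminorm is at least `ε²` times the tensor rank. The image of `f_n`, on the
other hand, only takes values in `{0, δ_0, …, δ_n}`.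
-/

section TensorRank

variable {S M N : Type*} [CommSemiring S] [AddCommMonoid M] [AddCommMonoid N] [Module S M]
  [Module S N]

theorem exists_list_sum_tmul_eq (t : M ⊗[S] N) :
    ∃ l : List (M × N), (l.map fun p => p.1 ⊗ₜ[S] p.2).sum = t := by
  obtain ⟨s, rfl⟩ := TensorProduct.exists_multiset t
  exact ⟨s.toList, by rw [← Multiset.sum_coe, ← Multiset.map_coe, Multiset.coe_toList]⟩

/-- The tensor rank of `t`: the least number of summands in a representation of `t` as a sum of
pure tensors. -/
noncomputable def tensorRank (t : M ⊗[S] N) : ℕ :=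
  sInf (List.length '' {l : List (M × N) | (l.map fun p => p.1 ⊗ₜ[S] p.2).sum = t})

theorem exists_list_length_eq_tensorRank (t : M ⊗[S] N) :
    ∃ l : List (M × N), (l.map fun p => p.1 ⊗ₜ[S] p.2).sum = t ∧ l.length = tensorRank t :=
  Nat.sInf_mem (Set.Nonempty.image List.length (exists_list_sum_tmul_eq t))

theorem tensorRank_sum_tmul_le_length (l : List (M × N)) :
    tensorRank (l.map fun p => p.1 ⊗ₜ[S] p.2).sum ≤ l.length :=
  Nat.sInf_le ⟨l, rfl, rfl⟩

theorem tensorRank_tmul_add_le (m : M) (n : N) (t : M ⊗[S] N) :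
    tensorRank (m ⊗ₜ[S] n + t) ≤ tensorRank t + 1 := by
  obtain ⟨l, rfl, hl⟩ := exists_list_length_eq_tensorRank t
  rw [← hl]
  exact tensorRank_sum_tmul_le_length ((m, n) :: l)

theorem mul_tensorRank_sum_tmul_le {c : ℝ} (hc : 0 ≤ c) {w : M → N → ℝ}
    (hw : ∀ m n, 0 ≤ w m n) (hcw : ∀ m ≠ 0, ∀ n ≠ 0, c ≤ w m n) (l : List (M × N)) :
    c * tensorRank (l.map fun p => p.1 ⊗ₜ[S] p.2).sum ≤ (l.map fun p => w p.1 p.2).sum := by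
  induction l with
  | nil =>
    have h : tensorRank (0 : M ⊗[S] N) = 0 := Nat.le_zero.1 (tensorRank_sum_tmul_le_length [])
    simp [h]
  | cons p l ih =>
    obtain ⟨m, n⟩ := p
    simp only [List.map_cons, List.sum_cons]
    set t := (l.map fun p => p.1 ⊗ₜ[S] p.2).sum
    by_cases hmn : m ⊗ₜ[S] n = 0
    · rw [hmn, zero_add]
      linarith [hw m n]
    · have hm : m ≠ 0 := by rintro rfl; exact hmn (TensorProduct.zero_tmul M n)
      have hn : n ≠ 0 := by rintro rfl; exact hmn (TensorProduct.tmul_zero N m)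
      calc c * tensorRank (m ⊗ₜ[S] n + t) ≤ c * (tensorRank t + 1) := by
            gcongr
            exact_mod_cast tensorRank_tmul_add_le m n t
        _ ≤ w m n + (l.map fun p => w p.1 p.2).sum := by linarith [hcw m hm n hn]

theorem rank_dualDistrib_le_tensorRank [StrongRankCondition S] {ι κ : Type*} [Fintype κ]
    (f : ι → Module.Dual S M) (g : κ → Module.Dual S N) (t : M ⊗[S] N) :
    (Matrix.of fun i j => TensorProduct.dualDistrib S M N (f i ⊗ₜ[S] g j) t).rank ≤
      tensorRank t := by
  obtain ⟨l, rfl, hl⟩ := exists_list_length_eq_tensorRank t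
  let A : Matrix ι (Fin l.length) S := .of fun i h => f i l[h].1
  let B : Matrix (Fin l.length) κ S := .of fun h j => g j l[h].2
  have factorization : (Matrix.of fun i j => TensorProduct.dualDistrib S M N (f i ⊗ₜ[S] g j)
      (l.map fun p => p.1 ⊗ₜ[S] p.2).sum) = A * B := by
    ext i j
    simp [A, B, Matrix.mul_apply, ← Fin.sum_univ_fun_getElem]
  rw [factorization, ← hl]
  exact (Matrix.rank_mul_le_left A B).trans (A.rank_le_card_width.trans_eq (Fintype.card_fin _))

end TensorRank

section NaturalMap

omit [CompleteSpace R] [Nontrivial R]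

/-- The natural map `Cfin(ℤ,R) ⊗ ℓ¹(ℤ,R) → Cfin(ℤ, ℓ¹(ℤ,R))`, `f ⊗ a ↦ (x ↦ f x • a)`. -/
noncomputable def naturalMap : ↥(CfZ R) ⊗[R] (ℤ →₀ R) →ₗ[R] ↥(CfL R) :=
  TensorProduct.lift <| LinearMap.mk₂ R
    (fun f a => ⟨fun x => f.1 x • a, (f.2.2.image (· • a)).subset
      (Set.range_comp (· • a) f.1).subset⟩)
    (fun f g a => Subtype.ext <| funext fun x => add_smul (f.1 x) (g.1 x) a)
    (fun c f a => Subtype.ext <| funext fun x => mul_smul c (f.1 x) a)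
    (fun f a b => Subtype.ext <| funext fun x => smul_add (f.1 x) a b)
    (fun c f a => Subtype.ext <| funext fun x => smul_comm (f.1 x) c a)

theorem naturalMap_tmul (f : CfZ R) (a : ℤ →₀ R) (x : ℤ) :
    (naturalMap R (f ⊗ₜ[R] a)).1 x = f.1 x • a := by
  rw [naturalMap, TensorProduct.lift.tmul]
  rfl

/-- The characteristic function of `s ⊆ ℤ` as an element of `Cfin(ℤ,R)`. -/
noncomputable def CfZ.indicator (s : Set ℤ) : ↥(CfZ R) :=
  ⟨s.indicator 1, continuous_of_discreteTopology, (Set.toFinite {0, 1}).subset <|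
    Set.range_subset_iff.2 fun x => Set.indicator_eq_zero_or_self s 1 x⟩

theorem naturalMap_surjective : Function.Surjective (naturalMap R) := by
  classical
  intro g
  have hg : (Set.range g.1).Finite := g.2
  refine ⟨∑ v ∈ hg.toFinset, CfZ.indicator R (g.1 ⁻¹' {v}) ⊗ₜ[R] v, ?_⟩
  ext x : 2
  simp [naturalMap_tmul, CfZ.indicator, Set.indicator_apply]

variable {R}

theorem naturalMap_apply_eq_finsuppScalarRight (t : ↥(CfZ R) ⊗[R] (ℤ →₀ R)) (x k : ℤ) :
    (naturalMap R t).1 x k = (TensorProduct.finsuppScalarRight R R ↥(CfZ R) ℤ t k).1 x := by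
  induction t with
  | zero => simp
  | tmul f a => simp [naturalMap_tmul, mul_comm]
  | add s t hs ht =>
    simp only [map_add, Finsupp.add_apply, Submodule.coe_add, Pi.add_apply, hs, ht]

variable (R) in
theorem naturalMap_injective : Function.Injective (naturalMap R) := by
  refine (injective_iff_map_eq_zero _).2 fun t ht => ?_
  refine (TensorProduct.finsuppScalarRight R R ↥(CfZ R) ℤ).map_eq_zero_iff.1 ?_
  ext k x
  rw [← naturalMap_apply_eq_finsuppScalarRight, ht]
  rfl

theorem naturalMap_apply_eq_dualDistrib (t : ↥(CfZ R) ⊗[R] (ℤ →₀ R)) (x k : ℤ) :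
    (naturalMap R t).1 x k = TensorProduct.dualDistrib R ↥(CfZ R) (ℤ →₀ R)
      ((LinearMap.proj x ∘ₗ (CfZ R).subtype) ⊗ₜ[R] Finsupp.lapply k) t := by
  induction t with
  | zero => simp
  | tmul f a => simp [naturalMap_tmul]
  | add s t hs ht =>
    simp only [map_add, Finsupp.add_apply, Submodule.coe_add, Pi.add_apply, hs, ht]

end NaturalMap

section Norms

omit [CompleteSpace R] [Nontrivial R]

variable {R}

theorem l1norm_nonneg (a : ℤ →₀ R) : 0 ≤ l1norm R a :=
  Finset.sum_nonneg fun _ _ => norm_nonneg _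

theorem l1norm_single (x : ℤ) (r : R) : l1norm R (Finsupp.single x r) = ‖r‖ :=
  Finsupp.sum_single_index norm_zero

theorem norm_apply_le_l1norm (a : ℤ →₀ R) (k : ℤ) : ‖a k‖ ≤ l1norm R a := by
  by_cases hk : a k = 0
  · simpa [hk] using l1norm_nonneg a
  · exact Finset.single_le_sum (f := fun i => ‖a i‖) (fun _ _ => norm_nonneg _)
      (Finsupp.mem_support_iff.2 hk)

theorem CfZ.norm_apply_le_iSup (f : CfZ R) (k : ℤ) : ‖f.1 k‖ ≤ ⨆ x, ‖f.1 x‖ := by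
  refine le_ciSup (f := fun x => ‖f.1 x‖) (Set.Finite.bddAbove ?_) k
  exact (f.2.2.image norm).subset (Set.range_comp norm f.1).subset

theorem sq_mul_tensorRank_le_pn {ε : ℝ} (hε : 0 ≤ ε) (hiso : ∀ r : R, ‖r‖ < ε → r = 0)
    (t : ↥(CfZ R) ⊗[R] (ℤ →₀ R)) : ε ^ 2 * tensorRank t ≤ pn R t := by
  have le_norm {r : R} (hr : r ≠ 0) : ε ≤ ‖r‖ := not_lt.1 fun h => hr (hiso r h)
  have iSup_nonneg (f : CfZ R) : 0 ≤ ⨆ x, ‖f.1 x‖ := Real.iSup_nonneg fun _ => norm_nonneg _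
  obtain ⟨l, hl⟩ := exists_list_sum_tmul_eq t
  refine le_csInf ⟨_, l, hl, rfl⟩ ?_
  rintro _ ⟨l, rfl, rfl⟩
  refine mul_tensorRank_sum_tmul_le (w := fun (f : CfZ R) a => (⨆ x, ‖f.1 x‖) * l1norm R a)
    (sq_nonneg ε) (fun f a => mul_nonneg (iSup_nonneg f) (l1norm_nonneg a)) ?_ l
  intro f hf a ha
  obtain ⟨x, hx⟩ : ∃ x, f.1 x ≠ 0 := Function.ne_iff.1 (Subtype.coe_ne_coe.2 hf)
  obtain ⟨k, hk⟩ := Finsupp.ne_iff.1 ha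
  rw [sq]
  exact mul_le_mul ((le_norm hx).trans (CfZ.norm_apply_le_iSup f x))
    ((le_norm hk).trans (norm_apply_le_l1norm a k)) hε (iSup_nonneg f)

end Norms

section DiagonalTensor

omit [CompleteSpace R]

theorem naturalMap_fn_apply (n : ℕ) (x : ℤ) :
    (naturalMap R (fn R n)).1 x =
      if x ∈ Set.Icc 0 (n : ℤ) then Finsupp.single x (1 : R) else 0 := by
  have summand (i : ℕ) : (naturalMap R (ind R i ⊗ₜ[R] Finsupp.single (i : ℤ) (1 : R))).1 x =
      if x = i then Finsupp.single x (1 : R) else 0 := by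
    rw [naturalMap_tmul]
    by_cases h : x = i <;> simp [ind, h]
  rw [fn, map_sum, Submodule.coe_sum, Finset.sum_apply]
  simp only [summand]
  cases x with
  | ofNat m => simp
  | negSucc m => simp

theorem supL_naturalMap_fn (n : ℕ) : supL R (naturalMap R (fn R n)) = ‖(1 : R)‖ := by
  have value (x : ℤ) : l1norm R ((naturalMap R (fn R n)).1 x) =
      if x ∈ Set.Icc 0 (n : ℤ) then ‖(1 : R)‖ else 0 := by
    rw [naturalMap_fn_apply]
    split_ifs
    · exact l1norm_single x 1
    · exact Finsupp.sum_zero_index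
  have value_le (x : ℤ) : l1norm R ((naturalMap R (fn R n)).1 x) ≤ ‖(1 : R)‖ := by
    rw [value]
    split_ifs <;> simp
  refine le_antisymm (ciSup_le value_le) ?_
  calc ‖(1 : R)‖ = l1norm R ((naturalMap R (fn R n)).1 0) := by simp [value]
    _ ≤ supL R (naturalMap R (fn R n)) := le_ciSup ⟨_, Set.forall_mem_range.2 value_le⟩ 0

theorem succ_le_tensorRank_fn (n : ℕ) : n + 1 ≤ tensorRank (fn R n) := by
  have rank_le := rank_dualDistrib_le_tensorRank
    (fun i : Fin (n + 1) => LinearMap.proj ((i : ℕ) : ℤ) ∘ₗ (CfZ R).subtype)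
    (fun j : Fin (n + 1) => Finsupp.lapply ((j : ℕ) : ℤ)) (fn R n)
  have pairing_eq_one : (Matrix.of fun i j : Fin (n + 1) =>
      (naturalMap R (fn R n)).1 ((i : ℕ) : ℤ) ((j : ℕ) : ℤ)) = 1 := by
    ext i j
    have hi : ((i : ℕ) : ℤ) ∈ Set.Icc 0 (n : ℤ) := by simp [Fin.is_le]
    rw [Matrix.of_apply, naturalMap_fn_apply, if_pos hi, Finsupp.single_apply]
    simp [Matrix.one_apply, Fin.ext_iff]
  simp only [← naturalMap_apply_eq_dualDistrib] at rank_le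
  rwa [pairing_eq_one, Matrix.rank_one, Fintype.card_fin] at rank_le

theorem sq_mul_le_pn_fn {ε : ℝ} (hε : 0 ≤ ε) (hiso : ∀ r : R, ‖r‖ < ε → r = 0) (n : ℕ) :
    ε ^ 2 * n ≤ pn R (fn R n) :=
  calc ε ^ 2 * n ≤ ε ^ 2 * tensorRank (fn R n) := by
        gcongr
        exact (Nat.le_succ n).trans (succ_le_tensorRank_fn R n)
    _ ≤ pn R (fn R n) := sq_mul_tensorRank_le_pn hε hiso (fn R n)

end DiagonalTensor

/-- For a nonzero Banach ring `R` isolated at `0` (with witness `ε`), the natural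
bijective map `Cfin(ℤ,R) ⊗̂[R] ℓ¹(ℤ,R) → Cfin(ℤ, ℓ¹(ℤ,R))` is not an isomorphism of
Banach modules: its inverse is unbounded.  Specifically, `f_n = ∑_{i≤n} 1_{{i}} ⊗ δ_i`
has image of norm `‖1‖_R` but source seminorm at least `ε² n`. -/
theorem stmt15 (ε : ℝ) (hε : 0 < ε) (hiso : ∀ r : R, ‖r‖ < ε → r = 0) :
    ∃ φ : (↥(CfZ R) ⊗[R] (ℤ →₀ R)) →ₗ[R] ↥(CfL R),
      (∀ (f : CfZ R) (a : ℤ →₀ R) (x : ℤ), (φ (f ⊗ₜ[R] a)).1 x = f.1 x • a) ∧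
      Function.Bijective φ ∧
      (¬ ∃ C : ℝ, ∀ t, pn R t ≤ C * supL R (φ t)) ∧
      (∀ n : ℕ, supL R (φ (fn R n)) = ‖(1 : R)‖ ∧ ε ^ 2 * n ≤ pn R (fn R n)) := by
  have lower_bound := sq_mul_le_pn_fn R hε.le hiso
  refine ⟨naturalMap R, naturalMap_tmul R, ⟨naturalMap_injective R, naturalMap_surjective R⟩, ?_,
    fun n => ⟨supL_naturalMap_fn R n, lower_bound n⟩⟩
  rintro ⟨C, hC⟩
  obtain ⟨n, hn⟩ := exists_nat_gt (C * ‖(1 : R)‖ / ε ^ 2)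
  rw [div_lt_iff₀' (by positivity)] at hn
  have upper_bound := hC (fn R n)
  rw [supL_naturalMap_fn] at upper_bound
  linarith [lower_bound n]
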